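/- ∫₀¹ [₂F₁(1/3,2/3;1|x)]²·(1−x)^{−1/2} dx = (3√3/2^{11/3})·(Γ(1/3)/√π)⁶·₅F₄(1/3,1/3,1/2,1/2,1/2; 5/6,5/6,5/6,1 | 1). -/

import Mathlib

open Real MeasureTheory Set

/-- Modified Bessel function `I₀(t) = (1/π)∫₀^π exp(t cos θ) dθ`. -/
noncomputable def I0 (t : ℝ) : ℝ := (1 / π) * ∫ θ in (0:ℝ)..π, exp (t * cos θ)

/-- Modified Bessel function `K₀(t) = ∫₀^∞ exp(−t cosh u) du`. -/
noncomputable def K0 (t : ℝ) : ℝ := ∫ u in Ioi (0:ℝ), exp (-(t * Real.cosh u))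

/-- Rising factorial `(a)ₙ = a(a+1)⋯(a+n−1)`. -/
noncomputable def ris (a : ℝ) (n : ℕ) : ℝ := ∏ k ∈ Finset.range n, (a + k)

/-- Generalized hypergeometric series `ₚF_q(a; b | x)`. -/
noncomputable def pFq (a b : List ℝ) (x : ℝ) : ℝ :=
  ∑' n : ℕ, ((a.map fun p => ris p n).prod / (b.map fun q => ris q n).prod) * x ^ n
    / (n.factorial : ℝ)


/-! Basic facts about rising and falling factorials. -/

lemma ris_zero (a : ℝ) : ris a 0 = 1 := by simp [ris]

lemma ris_succ (a : ℝ) (n : ℕ) : ris a (n + 1) = ris a n * (a + n) := by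
  simp [ris, Finset.prod_range_succ]

lemma ris_pos {a : ℝ} (ha : 0 < a) (n : ℕ) : 0 < ris a n := by
  unfold ris
  exact Finset.prod_pos fun k _ => by positivity

lemma ris_add (a : ℝ) (m n : ℕ) : ris a (m + n) = ris a m * ris (a + m) n := by
  induction n with
  | zero => simp [ris_zero]
  | succ n ih => rw [← add_assoc, ris_succ, ris_succ, ih]; push_cast; ring

lemma ris_one (n : ℕ) : ris 1 n = (n.factorial : ℝ) := by
  induction n with
  | zero => simp [ris_zero]
  | succ n ih => rw [ris_succ, ih, Nat.factorial_succ]; push_cast; ring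

lemma Gamma_add_nat {a : ℝ} (ha : 0 < a) (n : ℕ) : Gamma (a + n) = ris a n * Gamma a := by
  induction n with
  | zero => simp [ris_zero]
  | succ n ih =>
    have : a + ((n + 1 : ℕ) : ℝ) = (a + n) + 1 := by push_cast; ring
    rw [this, Real.Gamma_add_one (by positivity), ih, ris_succ]; ring

lemma ris_mono {a b : ℝ} (ha : 0 < a) (hab : a ≤ b) (n : ℕ) : ris a n ≤ ris b n := by
  unfold ris
  exact Finset.prod_le_prod (fun k _ => by positivity) (fun k _ => by linarith)

/-- Falling factorial. -/
noncomputable def dff (x : ℝ) (m : ℕ) : ℝ := ∏ l ∈ Finset.range m, (x - l)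

lemma dff_zero (x : ℝ) : dff x 0 = 1 := by simp [dff]

lemma dff_succ (x : ℝ) (m : ℕ) : dff x (m + 1) = dff x m * (x - m) := by
  simp [dff, Finset.prod_range_succ]

lemma dff_succ' (x : ℝ) (m : ℕ) : dff (x + 1) (m + 1) = (x + 1) * dff x m := by
  unfold dff
  rw [Finset.prod_range_succ', mul_comm]
  congr 1
  · simp
  · apply Finset.prod_congr rfl; intros; push_cast; ring

lemma dff_nat_zero (k m : ℕ) (h : k < m) : dff k m = 0 := by
  unfold dff
  exact Finset.prod_eq_zero (Finset.mem_range.2 h) (by simp)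

lemma ris_mul_dff (x : ℝ) (m j : ℕ) : ris x (m + j) = ris x m * dff (x + m + j - 1) j := by
  induction j with
  | zero => simp [dff_zero]
  | succ j ih =>
    have h : x + m + ((j + 1 : ℕ) : ℝ) - 1 = (x + m + j - 1) + 1 := by push_cast; ring
    rw [h, dff_succ', ← add_assoc, ris_succ, ih]; push_cast; ring

lemma dff_fact (m j : ℕ) : ((m + j).factorial : ℝ) = m.factorial * dff ((m + j : ℕ) : ℝ) j := by
  rw [← ris_one, ← ris_one, ris_mul_dff]
  congr 2; push_cast; ring

lemma hs_congr {ι : Type*} {f g : ι → ℝ} {s t : ℝ} (h : HasSum f s) (hf : ∀ n, g n = f n)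
    (hs : t = s) : HasSum g t := by
  have : g = f := funext hf
  rw [this, hs]; exact h

/-! Exchange of nonnegative double series. -/

lemma swapSum {ι κ : Type*} {f : ι → κ → ℝ} (hf : ∀ i j, 0 ≤ f i j) {r : ι → ℝ} {c : κ → ℝ} {S : ℝ}
    (h1 : ∀ i, HasSum (f i) (r i)) (h2 : ∀ j, HasSum (fun i => f i j) (c j))
    (h3 : HasSum r S) : HasSum c S := by
  have hs : Summable (fun p : ι × κ => f p.1 p.2) := by
    rw [summable_prod_of_nonneg (fun p => hf p.1 p.2)]
    refine ⟨fun i => (h1 i).summable, ?_⟩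
    simp only [(h1 _).tsum_eq]
    exact h3.summable
  have e1 := hs.hasSum.prod_fiberwise h1
  have e2 : HasSum (fun p : κ × ι => f p.2 p.1) (∑' p : ι × κ, f p.1 p.2) := by
    have := (Equiv.prodComm κ ι).hasSum_iff.2 hs.hasSum
    exact this
  have e3 := e2.prod_fiberwise h2
  rw [h3.unique e1]
  exact e3

/-! Beta integrals. -/

lemma beta_both {u v : ℝ} (hu : 0 < u) (hv : 0 < v) :
    IntegrableOn (fun x : ℝ => x ^ (u - 1) * (1 - x) ^ (v - 1)) (Ioo 0 1) ∧
    ∫ x in Ioo (0:ℝ) 1, x ^ (u - 1) * (1 - x) ^ (v - 1) = Gamma u * Gamma v / Gamma (u + v) := by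
  have h := Complex.betaIntegral_convergent (u := u) (v := v) (by simpa) (by simpa)
  rw [intervalIntegrable_iff_integrableOn_Ioo_of_le zero_le_one] at h
  have hre : ∀ x ∈ Ioo (0:ℝ) 1, ((x : ℂ) ^ ((u:ℂ) - 1) * (1 - (x : ℂ)) ^ ((v:ℂ) - 1)) =
      ((x ^ (u - 1) * (1 - x) ^ (v - 1) : ℝ) : ℂ) := by
    intro x hx
    rw [Complex.ofReal_mul, Complex.ofReal_cpow hx.1.le, Complex.ofReal_cpow (by linarith [hx.2])]
    push_cast; rfl
  have h' : IntegrableOn (fun x : ℝ => ((x ^ (u - 1) * (1 - x) ^ (v - 1) : ℝ) : ℂ)) (Ioo 0 1) :=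
    h.congr_fun hre measurableSet_Ioo
  refine ⟨by have := h'.re; simpa using! this, ?_⟩
  have e := Complex.Gamma_mul_Gamma_eq_betaIntegral (s := u) (t := v) (by simpa) (by simpa)
  rw [Complex.betaIntegral, intervalIntegral.integral_of_le zero_le_one,
    integral_Ioc_eq_integral_Ioo, setIntegral_congr_fun measurableSet_Ioo hre,
    integral_complex_ofReal, ← Complex.ofReal_add, Complex.Gamma_ofReal, Complex.Gamma_ofReal,
    Complex.Gamma_ofReal] at e
  have e' : Gamma u * Gamma v = Gamma (u + v) *
    ∫ x in Ioo (0:ℝ) 1, x ^ (u - 1) * (1 - x) ^ (v - 1) := by exact_mod_cast e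
  rw [e', mul_div_cancel_left₀]
  exact (Real.Gamma_pos_of_pos (by positivity)).ne'

lemma binom_series (a : ℝ) {x : ℝ} (h0 : 0 < x) (h1 : x < 1) :
    HasSum (fun n : ℕ => ris a n / n.factorial * x ^ n) ((1 - x) ^ (-a)) := by
  have h := (Real.one_div_one_sub_rpow_hasFPowerSeriesOnBall_zero a).hasSum (y := x)
    (by simp [Metric.mem_eball, edist_dist, abs_of_pos h0, h1])
  rw [Real.rpow_neg (by linarith), ← one_div]
  simp only [zero_add] at h
  refine hs_congr h (fun n => ?_) rfl
  rw [FormalMultilinearSeries.ofScalars_apply_eq, smul_eq_mul]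
  congr 1
  have e := Ring.factorial_nsmul_multichoose_eq_ascPochhammer a n
  rw [Polynomial.ascPochhammer_smeval_eq_eval, nsmul_eq_mul] at e
  have e2 : (ascPochhammer ℝ n).eval a = ris a n := by
    clear e h
    induction n with
    | zero => simp [ris_zero]
    | succ n ih => rw [ascPochhammer_succ_eval, ih, ris_succ]
  have e3 : Ring.choose (a + n - 1) n = Ring.multichoose a n := by
    rw [Ring.choose]; congr 1; ring
  rw [e3, ← e2, ← e]
  field_simp

/-- Gauss's summation theorem. -/
lemma gauss {a b c : ℝ} (ha : 0 < a) (hb : 0 < b) (hc : a + b < c) :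
    HasSum (fun n : ℕ => ris a n * ris b n / (n.factorial * ris c n))
      (Gamma c * Gamma (c - a - b) / (Gamma (c - a) * Gamma (c - b))) := by
  set F : ℕ → ℝ → ℝ := fun n x => ris a n / n.factorial * (x ^ (b + n - 1) * (1 - x) ^ (c - b - 1))
    with hF
  set f : ℝ → ℝ := fun x => x ^ (b - 1) * (1 - x) ^ (c - a - b - 1) with hf
  have hlim : ∀ x ∈ Ioo (0:ℝ) 1, HasSum (fun n => F n x) (f x) := by
    intro x hx
    have hx1 : 0 < 1 - x := by linarith [hx.2]
    have := (binom_series a hx.1 hx.2).mul_left (x ^ (b - 1) * (1 - x) ^ (c - b - 1))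
    refine hs_congr this (fun n => ?_) ?_
    · have _ := True.intro
      have e : b + n - 1 = (b - 1) + n := by ring
      simp only [hF]
      rw [e, Real.rpow_add hx.1, Real.rpow_natCast]; ring
    · simp only [hf]
      rw [mul_assoc, ← Real.rpow_add hx1]; congr 2; ring
  have hnn : ∀ n, ∀ x ∈ Ioo (0:ℝ) 1, 0 ≤ F n x := by
    intro n x hx
    have hx1 : 0 < 1 - x := by linarith [hx.2]
    have h0 := hx.1
    have := ris_pos ha n
    simp only [hF]
    positivity
  have key : HasSum (fun n => ∫ x in Ioo (0:ℝ) 1, F n x) (∫ x in Ioo (0:ℝ) 1, f x) := by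
    refine hasSum_integral_of_dominated_convergence F (fun n => ?_) (fun n => ?_) ?_ ?_ ?_
    · exact ((beta_both (u := b + n) (v := c - b) (by positivity)
        (by linarith)).1.const_mul _).aestronglyMeasurable
    · exact (ae_restrict_iff' measurableSet_Ioo).2 (ae_of_all _ fun x hx => by
        rw [Real.norm_of_nonneg (hnn n x hx)])
    · exact (ae_restrict_iff' measurableSet_Ioo).2 (ae_of_all _ fun x hx => (hlim x hx).summable)
    · refine (beta_both (u := b) (v := c - a - b) hb (by linarith)).1.congr_fun ?_
        measurableSet_Ioo
      intro x hx
      exact (hlim x hx).tsum_eq.symm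
    · exact (ae_restrict_iff' measurableSet_Ioo).2 (ae_of_all _ hlim)
  have g1 := Real.Gamma_pos_of_pos (show 0 < c - b by linarith)
  have g2 := Real.Gamma_pos_of_pos hb
  have g3 := Real.Gamma_pos_of_pos (show 0 < c by linarith)
  have g4 := Real.Gamma_pos_of_pos (show 0 < c - a by linarith)
  rw [(beta_both (u := b) (v := c - a - b) hb (by linarith)).2] at key
  have k2 := key.mul_left (Gamma c / (Gamma b * Gamma (c - b)))
  refine hs_congr k2 (fun n => ?_) ?_
  · have _ := True.intro
    have r := ris_pos (show 0 < c by linarith) n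
    simp only [hF]
    rw [integral_const_mul, (beta_both (u := b + n) (v := c - b) (by positivity)
        (by linarith)).2, show b + (n:ℝ) + (c - b) = c + n by ring,
        Gamma_add_nat hb, Gamma_add_nat (by linarith)]
    field_simp
  · rw [show b + (c - a - b) = c - a by ring]
    field_simp

lemma ris_shift {x : ℝ} (hx : 0 < x) (m : ℕ) : ris (x + 1) m = ris x m * (x + m) / x := by
  rw [eq_div_iff hx.ne']
  have h1 := ris_add x 1 m
  rw [add_comm 1 m, ris_succ] at h1
  have h2 : ris x 1 = x := by simp [ris]
  rw [h2] at h1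
  push_cast at h1
  linarith

/-! Terminating very-well-poised sum. -/

noncomputable def tC (a p y k : ℝ) (m : ℕ) : ℝ :=
  (a + 2 * m) * ris a m * ris (1 + a - p) m * dff y m * dff k m /
    (m.factorial * ris p m * ris (1 + a + y) m * ris (1 + a + k) m)

lemma tC_step {a p y : ℝ} (ha : 0 < a) (hp : 0 < p) (hy : 0 ≤ y) (k M : ℕ) :
    ∑ m ∈ Finset.range (M + 1), ((p + k) * (1 + a + y + k) / ((1 + a + k) * (p + y + k)) *
      tC a p y ((k + 1 : ℕ) : ℝ) m - tC a p y k m) =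
    - (ris a M * ris (1 + a - p) M * dff y M * dff k M /
      (M.factorial * ris p M * ris (1 + a + y) M * ris (1 + a + k) M)) *
      ((a + M) * (1 + a - p + M) * (y - M)) / ((p + y + k) * (1 + a + k + M)) := by
  have hk : (0:ℝ) ≤ k := by positivity
  induction M with
  | zero =>
    have h1 : 0 < p + y + k := by positivity
    have h2 : 0 < 1 + a + k := by positivity
    simp [tC, ris_zero, dff_zero]
    field_simp
    ring
  | succ M ih =>
    rw [Finset.sum_range_succ, ih]
    have e1 : (1 + a + ((k + 1 : ℕ) : ℝ)) = (1 + a + k) + 1 := by push_cast; ring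
    have e2 : dff (((k + 1 : ℕ) : ℝ)) (M + 1) = (k + 1) * dff k M := by
      push_cast; exact dff_succ' _ _
    unfold tC
    rw [e1, ris_shift (by positivity), e2]
    have hP := ris_pos hp M
    have hY := ris_pos (show 0 < 1 + a + y by positivity) M
    have hK := ris_pos (show 0 < 1 + a + (k:ℝ) by positivity) M
    simp only [ris_succ, dff_succ, Nat.factorial_succ]
    have f0 : (0:ℝ) < M.factorial := by positivity
    generalize ris p M = P at *
    generalize ris (1 + a + y) M = Y at *
    generalize ris (1 + a + k) M = K at *
    generalize ris (1 + a - p) M = E at *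
    generalize ris a M = A at *
    generalize dff y M = Dy at *
    generalize dff k M = Dk at *
    push_cast
    generalize (M.factorial : ℝ) = f at *
    have hM : (0:ℝ) ≤ M := by positivity
    clear e1 e2 ih
    generalize (M : ℝ) = x at *
    generalize (k : ℝ) = z at *
    have q1 : p + y + z ≠ 0 := by positivity
    have q2 : 1 + a + z ≠ 0 := by positivity
    have q3 : 1 + a + z + x ≠ 0 := by positivity
    have q4 : 1 + a + z + (x + 1) ≠ 0 := by positivity
    have q5 : 1 + a + y + x ≠ 0 := by positivity
    have q6 : p + x ≠ 0 := by positivity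
    have q7 : x + 1 ≠ 0 := by positivity
    field_simp
    ring

lemma tC_sum {a p y : ℝ} (ha : 0 < a) (hp : 0 < p) (hy : 0 ≤ y) (k : ℕ) :
    ∑ m ∈ Finset.range (k + 1), tC a p y k m =
      a * ris (1 + a) k * ris (p + y) k / (ris p k * ris (1 + a + y) k) := by
  induction k with
  | zero => simp [tC, ris_zero, dff_zero]
  | succ k ih =>
    have h := tC_step ha hp hy k (k + 1)
    rw [dff_nat_zero k (k + 1) (by omega), Finset.sum_sub_distrib, ← Finset.mul_sum,
      Finset.sum_range_succ (fun m => tC a p y k m), ih] at h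
    have z : tC a p y k (k + 1) = 0 := by simp [tC, dff_nat_zero k (k + 1) (by omega)]
    rw [z] at h
    have hP := ris_pos hp k
    have hY := ris_pos (show 0 < 1 + a + y by positivity) k
    have q1 : (0:ℝ) < p + y + k := by positivity
    have q2 : (0:ℝ) < 1 + a + k := by positivity
    have q3 : (0:ℝ) < p + k := by positivity
    have q4 : (0:ℝ) < 1 + a + y + k := by positivity
    simp only [ris_succ]
    generalize (∑ m ∈ Finset.range (k + 1 + 1), tC a p y ((k + 1 : ℕ) : ℝ) m) = S at *
    have h' : (p + k) * (1 + a + y + k) / ((1 + a + k) * (p + y + k)) * S =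
      a * ris (1 + a) k * ris (p + y) k / (ris p k * ris (1 + a + y) k) := by
      simp at h; linarith
    field_simp at h' ⊢
    linarith

/-! The specialised terminating Dougall sum. -/

noncomputable def eD (j : ℕ) : ℝ := ris (1/3) j * ris (1/2) j ^ 2 / (j.factorial * ris (5/6) j ^ 2)

noncomputable def tD (n : ℝ) (j : ℕ) : ℝ :=
  eD j * (dff n j / dff (n - 5/6) j) * (ris (n + 1/2) j / ris (n + 4/3) j)

lemma dff_ne (n j : ℕ) : dff ((n:ℝ) - 5/6) j ≠ 0 := by
  unfold dff
  rw [Finset.prod_ne_zero_iff]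
  intro l _ h
  have : (6 * n : ℝ) = 6 * l + 5 := by linarith
  have : 6 * n = 6 * l + 5 := by exact_mod_cast this
  omega

lemma tD_step (n M : ℕ) :
    ∑ j ∈ Finset.range (M + 1), ((n + 1/6) * (n + 7/6) * (n + 5/6) ^ 2 /
      ((n + 1/3) * (n + 2/3) ^ 2 * (n + 4/3)) * tD ((n + 1 : ℕ) : ℝ) j - tD n j) =
    - tD n M * ((1/3 + M) * (1/2 + M) ^ 2 * (n + M + 1/2) / (n + M + 4/3)) *
      ((4 * n + 3) / (2 * (2 * n + 1) * (n + 1/3) * (n + 2/3) ^ 2)) := by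
  induction M with
  | zero =>
    simp [tD, eD, ris_zero, dff_zero]
    field_simp
    ring
  | succ M ih =>
    rw [Finset.sum_range_succ, ih]
    have e1 : dff (((n + 1 : ℕ) : ℝ)) (M + 1) = (n + 1) * dff n M := by
      push_cast; exact dff_succ' _ _
    have e2 : dff (((n + 1 : ℕ) : ℝ) - 5/6) (M + 1) = (n + 1/6) * dff (n - 5/6) M := by
      have := dff_succ' ((n:ℝ) - 5/6) M
      rw [show ((n + 1 : ℕ) : ℝ) - 5/6 = (n:ℝ) - 5/6 + 1 by push_cast; ring, this]; ring
    have e3 : ((n + 1 : ℕ) : ℝ) + 1/2 = (n + 1/2) + 1 := by push_cast; ring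
    have e4 : ((n + 1 : ℕ) : ℝ) + 4/3 = (n + 4/3) + 1 := by push_cast; ring
    have h0 := dff_ne n M
    have h1 := dff_ne n (M + 1)
    rw [dff_succ, mul_ne_zero_iff] at h1
    have h2 := h1.2
    unfold tD eD
    rw [e1, e2, e3, e4, ris_shift (by positivity), ris_shift (by positivity)]
    have hP := ris_pos (show (0:ℝ) < 5/6 by norm_num) M
    have hY := ris_pos (show 0 < (n:ℝ) + 4/3 by positivity) M
    simp only [ris_succ, dff_succ, Nat.factorial_succ]
    have f0 : (0:ℝ) < M.factorial := by positivity
    clear e1 e2 e3 e4 ih h1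
    generalize ris (5/6) M = P at *
    generalize ris ((n:ℝ) + 4/3) M = Y at *
    generalize ris ((n:ℝ) + 1/2) M = K at *
    generalize ris (1/3) M = E at *
    generalize ris (1/2) M = A at *
    generalize dff n M = Dy at *
    generalize dff ((n:ℝ) - 5/6) M = Dk at *
    push_cast
    generalize (M.factorial : ℝ) = f at *
    have hM : (0:ℝ) ≤ M := by positivity
    have hn : (0:ℝ) ≤ n := by positivity
    generalize (M : ℝ) = x at *
    generalize (n : ℝ) = z at *
    generalize hw : z - 5/6 - x = w at *
    have q1 : z + 1/6 ≠ 0 := by positivity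
    have q2 : z + 1/3 ≠ 0 := by positivity
    have q3 : z + 2/3 ≠ 0 := by positivity
    have q4 : z + 4/3 ≠ 0 := by positivity
    have q5 : z + x + 4/3 ≠ 0 := by positivity
    have q6 : z + 4/3 + x ≠ 0 := by positivity
    have q7 : x + 1 ≠ 0 := by positivity
    have q8 : 5/6 + x ≠ 0 := by positivity
    have q9 : z + 1/2 ≠ 0 := by positivity
    have q10 : 2 * z + 1 ≠ 0 := by positivity
    have q11 : z + 4/3 + (x + 1) ≠ 0 := by positivity
    have q12 : z + (x + 1) + 4/3 ≠ 0 := by positivity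
    field_simp
    rw [← hw]
    ring

lemma tD_sum (n : ℕ) :
    ∑ j ∈ Finset.range (n + 1), tD n j =
      ris (1/3) n * ris (2/3) n ^ 2 * ris (4/3) n /
        (ris (1/6) n * ris (7/6) n * ris (5/6) n ^ 2) := by
  induction n with
  | zero => simp [tD, eD, ris_zero, dff_zero]
  | succ n ih =>
    have h := tD_step n (n + 1)
    have z : tD n (n + 1) = 0 := by simp [tD, dff_nat_zero n (n + 1) (by omega)]
    rw [z, Finset.sum_sub_distrib, ← Finset.mul_sum,
      Finset.sum_range_succ (fun m => tD n m), ih, z] at h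
    have h1 := ris_pos (show (0:ℝ) < 1/6 by norm_num) n
    have h2 := ris_pos (show (0:ℝ) < 7/6 by norm_num) n
    have h3 := ris_pos (show (0:ℝ) < 5/6 by norm_num) n
    simp only [ris_succ]
    generalize (∑ m ∈ Finset.range (n + 1 + 1), tD ((n + 1 : ℕ) : ℝ) m) = S at *
    have h' : (n + 1/6) * (n + 7/6) * (n + 5/6) ^ 2 /
      ((n + 1/3) * (n + 2/3) ^ 2 * (n + 4/3)) * S =
      ris (1/3) n * ris (2/3) n ^ 2 * ris (4/3) n /
        (ris (1/6) n * ris (7/6) n * ris (5/6) n ^ 2) := by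
      linarith
    have q0 : (n:ℝ) + 1/6 ≠ 0 := by positivity
    have q1 : (n:ℝ) + 7/6 ≠ 0 := by positivity
    have q2 : (n:ℝ) + 5/6 ≠ 0 := by positivity
    have q3 : (n:ℝ) + 1/3 ≠ 0 := by positivity
    have q4 : (n:ℝ) + 2/3 ≠ 0 := by positivity
    have q5 : (n:ℝ) + 4/3 ≠ 0 := by positivity
    have hS : S = (((n + 1/3) * (n + 2/3) ^ 2 * (n + 4/3)) / ((n + 1/6) * (n + 7/6) * (n + 5/6) ^ 2)) *
      (ris (1/3) n * ris (2/3) n ^ 2 * ris (4/3) n /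
        (ris (1/6) n * ris (7/6) n * ris (5/6) n ^ 2)) := by
      rw [← h', ← mul_assoc, div_mul_div_comm, mul_comm (((n:ℝ) + 1/3) * (n + 2/3) ^ 2 * (n + 4/3)),
        div_self (by positivity), one_mul]
    rw [hS, div_mul_div_comm, div_eq_div_iff (by positivity) (by positivity)]
    ring

/-! Nonnegative double sums over a product. -/

lemma prodSum {ι κ : Type*} {f : ι → κ → ℝ} (hf : ∀ i j, 0 ≤ f i j) {r : ι → ℝ} {S : ℝ}
    (h1 : ∀ i, HasSum (f i) (r i)) (h3 : HasSum r S) :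
    HasSum (fun p : ι × κ => f p.1 p.2) S := by
  have hs : Summable (fun p : ι × κ => f p.1 p.2) := by
    rw [summable_prod_of_nonneg (fun p => hf p.1 p.2)]
    refine ⟨fun i => (h1 i).summable, ?_⟩
    simp only [(h1 _).tsum_eq]
    exact h3.summable
  have e1 := hs.hasSum.prod_fiberwise h1
  rw [h3.unique e1]
  exact hs.hasSum

noncomputable def hh (a : ℝ) (i m : ℕ) : ℝ := dff i m / ris (1 + a) (i + m)

noncomputable def WW (a p : ℝ) (m : ℕ) : ℝ :=
  (a + 2 * m) * ris a m * ris (1 + a - p) m / (m.factorial * ris p m)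

lemma dff_nonneg (i m : ℕ) : 0 ≤ dff i m := by
  rcases lt_or_ge i m with h | h
  · rw [dff_nat_zero i m h]
  · obtain ⟨r, rfl⟩ := Nat.exists_eq_add_of_le' h
    have := dff_fact r m
    have h1 : (0:ℝ) < (r + m).factorial := by positivity
    have h2 : (0:ℝ) < r.factorial := by positivity
    rw [this] at h1
    exact (pos_of_mul_pos_right h1 h2.le).le

lemma hh_nonneg {a : ℝ} (ha : 0 < a) (i m : ℕ) : 0 ≤ hh a i m :=
  div_nonneg (dff_nonneg i m) (ris_pos (by positivity) _).le

lemma conn {a p : ℝ} (ha : 0 < a) (hp : 0 < p) (i k : ℕ) :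
    HasSum (fun m => WW a p m * hh a i m * hh a k m)
      (a * ris p (i + k) / (ris p i * ris p k * ris (1 + a) (i + k))) := by
  have h := tC_sum ha hp (y := i) (by positivity) k
  have hI := ris_pos (show 0 < 1 + a by positivity) i
  have hK := ris_pos (show 0 < 1 + a by positivity) k
  have h2 : HasSum (fun m => tC a p i k m)
      (a * ris (1 + a) k * ris (p + i) k / (ris p k * ris (1 + a + i) k)) := by
    rw [← h]
    apply hasSum_sum_of_ne_finset_zero
    intro m hm
    have : k < m := by simpa using hm
    simp [tC, dff_nat_zero k m this]
  refine hs_congr (h2.mul_left (1 / (ris (1 + a) i * ris (1 + a) k))) (fun m => ?_) ?_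
  · simp only [tC, WW, hh, ris_add (1 + a)]
    field_simp
  · have h1 := ris_pos hp i
    have h1 := ris_pos hp k
    have h1 := ris_pos (show 0 < 1 + a + i by positivity) k
    rw [ris_add, ris_add]
    field_simp

lemma shift_sum {f : ℕ → ℝ} {s : ℝ} (m : ℕ) (h0 : ∀ i < m, f i = 0)
    (h : HasSum (fun r => f (r + m)) s) : HasSum f s := by
  rw [hasSum_nat_add_iff] at h
  rw [Finset.sum_eq_zero (fun i hi => h0 i (Finset.mem_range.1 hi)), add_zero] at h
  exact h

lemma gauss_shift {a b c : ℝ} (ha : 0 < a) (hb : 0 < b) (hc : 0 < c) (h : b + c < 1 + a) (m : ℕ) :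
    HasSum (fun i => ris b i * ris c i / i.factorial * hh a i m)
      (ris b m * ris c m * Gamma (1 + a) * Gamma (1 + a - b - c) /
        (ris (1 + a - b) m * Gamma (1 + a - b) * (ris (1 + a - c) m * Gamma (1 + a - c)))) := by
  apply shift_sum m
  · intro i hi
    simp [hh, dff_nat_zero i m hi]
  have g := gauss (a := b + m) (b := c + m) (c := 1 + a + (m + m : ℕ)) (by positivity)
    (by positivity) (by push_cast; linarith)
  have q1 := ris_pos (show 0 < 1 + a by positivity) (m + m)
  refine hs_congr (g.mul_left (ris b m * ris c m / ris (1 + a) (m + m))) (fun r => ?_) ?_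
  · rw [hh, dff_fact, add_comm r m, ris_add b, ris_add c, show m + r + m = (m + m) + r by omega,
      ris_add (1 + a)]
    have d0 : dff ((m + r : ℕ) : ℝ) m ≠ 0 := by
      have := dff_fact r m
      rw [add_comm r m] at this
      intro h0
      rw [h0, mul_zero] at this
      exact (Nat.factorial_pos (m + r)).ne' (by exact_mod_cast this)
    have q2 := ris_pos (show 0 < 1 + a + (m + m : ℕ) by positivity) r
    field_simp
  · rw [Gamma_add_nat (by positivity),
      show 1 + a + ((m + m : ℕ) : ℝ) - (b + m) = (1 + a - b) + m by push_cast; ring,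
      show 1 + a + ((m + m : ℕ) : ℝ) - (c + m) = (1 + a - c) + m by push_cast; ring,
      show (1 + a - b + (m:ℝ)) - (c + m) = 1 + a - b - c by ring,
      Gamma_add_nat (by linarith), Gamma_add_nat (by linarith)]
    field_simp

/-- Dougall's nonterminating very-well-poised sum. -/
lemma dougall {a b c d : ℝ} (ha : 0 < a) (hb : 0 < b) (hc : 0 < c) (hd : 0 < d)
    (h : b + c + d < 1 + a) :
    HasSum (fun m : ℕ => (a + 2 * m) * ris a m * ris b m * ris c m * ris d m /
        (m.factorial * ris (1 + a - b) m * ris (1 + a - c) m * ris (1 + a - d) m))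
      (a * Gamma (1 + a - b) * Gamma (1 + a - c) * Gamma (1 + a - d) * Gamma (1 + a - b - c - d) /
        (Gamma (1 + a) * Gamma (1 + a - b - c) * Gamma (1 + a - b - d) * Gamma (1 + a - c - d))) := by
  have r1 := fun n => ris_pos (show 0 < 1 + a by linarith) n
  have rc := fun n => ris_pos hc n
  have rb := fun n => ris_pos hb n
  have rd := fun n => ris_pos hd n
  have ra := fun n => ris_pos ha n
  have sb := fun n => ris_pos (show 0 < 1 + a - b by linarith) n
  have sc := fun n => ris_pos (show 0 < 1 + a - c by linarith) n
  have sd := fun n => ris_pos (show 0 < 1 + a - d by linarith) n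
  have G1 := Gamma_pos_of_pos (show 0 < 1 + a by linarith)
  have Gb := Gamma_pos_of_pos (show 0 < 1 + a - b by linarith)
  have Gc := Gamma_pos_of_pos (show 0 < 1 + a - c by linarith)
  have Gd := Gamma_pos_of_pos (show 0 < 1 + a - d by linarith)
  have Gbc := Gamma_pos_of_pos (show 0 < 1 + a - b - c by linarith)
  have Gbd := Gamma_pos_of_pos (show 0 < 1 + a - b - d by linarith)
  have Gcd := Gamma_pos_of_pos (show 0 < 1 + a - c - d by linarith)
  have Hx : ∀ i m, 0 ≤ ris b i * ris c i / i.factorial * hh a i m := fun i m => by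
    have := hh_nonneg ha i m
    have := rb i
    have := rc i
    positivity
  have Hy : ∀ i m, 0 ≤ ris d i * ris c i / i.factorial * hh a i m := fun i m => by
    have := hh_nonneg ha i m
    have := rd i
    have := rc i
    positivity
  have Hw : ∀ m, 0 ≤ WW a c m := fun m => by
    have := ra m
    have := rc m
    have := sc m
    unfold WW
    positivity
  -- the sum over pairs
  have hR : HasSum (fun q : ℕ × ℕ => a * (ris b q.2 * ris d q.1 * ris c (q.2 + q.1)) /
      (q.2.factorial * q.1.factorial * ris (1 + a) (q.2 + q.1)))
      (a * Gamma (1 + a) * Gamma (1 + a - b - c - d) /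
        (Gamma (1 + a - c) * Gamma (1 + a - b - d))) := by
    refine prodSum (f := fun k i => a * (ris b i * ris d k * ris c (i + k)) /
      (i.factorial * k.factorial * ris (1 + a) (i + k))) (r := fun k =>
      a * Gamma (1 + a) * Gamma (1 + a - b - c) / (Gamma (1 + a - b) * Gamma (1 + a - c)) *
        (ris d k * ris c k / (k.factorial * ris (1 + a - b) k))) ?_ ?_ ?_
    · intro k i
      have := rb i
      have := rd k
      have := rc (i + k)
      have := r1 (i + k)
      positivity
    · intro k
      have g := gauss (a := b) (b := c + k) (c := 1 + a + k) hb (by positivity) (by linarith)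
      refine hs_congr (g.mul_left (a * ris d k * ris c k / (k.factorial * ris (1 + a) k)))
        (fun i => ?_) ?_
      · have := r1 k
        have := ris_pos (show 0 < 1 + a + k by positivity) i
        rw [add_comm i k, ris_add c, ris_add (1 + a)]
        field_simp
      · have := r1 k
        have := sb k
        rw [Gamma_add_nat (by positivity),
          show 1 + a + (k:ℝ) - b - (c + k) = 1 + a - b - c by ring,
          show 1 + a + (k:ℝ) - b = (1 + a - b) + k by ring,
          show 1 + a + (k:ℝ) - (c + k) = 1 + a - c by ring,
          Gamma_add_nat (by linarith)]
        field_simp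
    · have g := gauss (a := d) (b := c) (c := 1 + a - b) hd hc (by linarith)
      refine hs_congr (g.mul_left _) (fun i => rfl) ?_
      rw [show 1 + a - b - d - c = 1 + a - b - c - d by ring]
      field_simp
  have key := swapSum (ι := ℕ × ℕ) (κ := ℕ)
    (f := fun q m => WW a c m * (ris d q.1 * ris c q.1 / q.1.factorial * hh a q.1 m) *
      (ris b q.2 * ris c q.2 / q.2.factorial * hh a q.2 m))
    (fun q m => mul_nonneg (mul_nonneg (Hw m) (Hy _ _)) (Hx _ _)) (c := fun m =>
      WW a c m * (ris d m * ris c m * Gamma (1 + a) * Gamma (1 + a - d - c) /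
        (ris (1 + a - d) m * Gamma (1 + a - d) * (ris (1 + a - c) m * Gamma (1 + a - c)))) *
      (ris b m * ris c m * Gamma (1 + a) * Gamma (1 + a - b - c) /
        (ris (1 + a - b) m * Gamma (1 + a - b) * (ris (1 + a - c) m * Gamma (1 + a - c)))))
    (fun q => ?_) (fun m => ?_) hR
  · refine hs_congr (key.mul_left (Gamma (1 + a - d) * Gamma (1 + a - c) * Gamma (1 + a - b) *
      Gamma (1 + a - c) / (Gamma (1 + a) ^ 2 * Gamma (1 + a - c - d) * Gamma (1 + a - b - c))))
      (fun m => ?_) ?_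
    · have := rc m
      have := sb m
      have := sc m
      have := sd m
      rw [show 1 + a - d - c = 1 + a - c - d by ring, WW]
      field_simp
    · field_simp
  · refine hs_congr ((conn ha hc q.2 q.1).mul_left (ris d q.1 * ris c q.1 / q.1.factorial *
      (ris b q.2 * ris c q.2 / q.2.factorial))) (fun m => ?_) ?_
    · ring
    · have := rc q.1
      have := rc q.2
      have := r1 (q.2 + q.1)
      field_simp
  · refine prodSum (f := fun k i => WW a c m * (ris d k * ris c k / k.factorial * hh a k m) *
      (ris b i * ris c i / i.factorial * hh a i m))
      (fun k i => mul_nonneg (mul_nonneg (Hw m) (Hy _ _)) (Hx _ _))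
      (fun k => (gauss_shift ha hb hc (by linarith) m).mul_left _) ?_
    exact ((gauss_shift ha hd hc (by linarith) m).mul_left _).mul_right _

noncomputable def TT (j n : ℕ) : ℝ :=
  (4 * n + 1) * (ris (1/2) n * ris (1/3) n / (n.factorial * ris (7/6) n)) *
    (ris (1/6) n * ris (1/2) n / (n.factorial * ris (4/3) n)) * tD n j

noncomputable def dd (n : ℕ) : ℝ :=
  ris (1/2) n * ris (1/3) n * ris (2/3) n / (n.factorial * ris (7/6) n * ris (5/6) n)

noncomputable def tt (j : ℕ) : ℝ :=
  eD j * (ris (1/3) j * ris (1/2) j / (j.factorial * ris (5/6) j))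

noncomputable def CC : ℝ := 2 * Gamma (7/6) * Gamma (4/3) / (Gamma (2/3) * Gamma (5/6))

lemma TT_zero (j n : ℕ) (h : n < j) : TT j n = 0 := by
  simp [TT, tD, dff_nat_zero n j h]

lemma TT_shift (j m : ℕ) : TT j (m + j) =
    2 * eD j * (ris (1/2) j * ris (1/3) j * ris (1/2) (j + j) /
      (j.factorial * ris (7/6) j * ris (4/3) (j + j))) *
    (((1/2 + ((j + j : ℕ) : ℝ)) + 2 * m) * ris (1/2 + ((j + j : ℕ) : ℝ)) m * ris (1/3 + j) m *
      ris (1/2 + j) m * ris (1/6) m /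
      (m.factorial * ris (7/6 + j) m * ris (1 + j) m * ris (4/3 + ((j + j : ℕ) : ℝ)) m)) := by
  have p := fun (x : ℝ) (hx : 0 < x) n => ris_pos hx n
  have d6 : dff (((m + j : ℕ) : ℝ) - 5/6) j ≠ 0 := dff_ne (m + j) j
  have a1 : ris (1/6) (m + j) = ris (1/6) m * dff (((m + j : ℕ) : ℝ) - 5/6) j := by
    rw [ris_mul_dff]; congr 2; push_cast; ring
  have a2 : ris (1/2) (m + j) * ris (((m + j : ℕ) : ℝ) + 1/2) j =
      ris (1/2) (j + j) * ris (1/2 + ((j + j : ℕ) : ℝ)) m := by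
    rw [← ris_add, add_comm _ (1/2 : ℝ), ← ris_add]; congr 1; omega
  have a3 : ris (4/3) (m + j) * ris (((m + j : ℕ) : ℝ) + 4/3) j =
      ris (4/3) (j + j) * ris (4/3 + ((j + j : ℕ) : ℝ)) m := by
    rw [← ris_add, add_comm _ (4/3 : ℝ), ← ris_add]; congr 1; omega
  have a4 : ris (1/2) (m + j) = ris (1/2) j * ris (1/2 + j) m := by rw [add_comm, ris_add]
  have a5 : ris (1/3) (m + j) = ris (1/3) j * ris (1/3 + j) m := by rw [add_comm, ris_add]
  have a6 : ris (7/6) (m + j) = ris (7/6) j * ris (7/6 + j) m := by rw [add_comm, ris_add]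
  have a7 : ((m + j).factorial : ℝ) = j.factorial * ris (1 + j) m := by
    rw [← ris_one, ← ris_one, add_comm, ris_add]
  have a8 := dff_fact m j
  have a9 : dff ((m + j : ℕ) : ℝ) j / ((m + j).factorial : ℝ) = 1 / m.factorial := by
    have : ((m + j).factorial : ℝ) ≠ 0 := by positivity
    rw [div_eq_div_iff this (by positivity), a8]; ring
  have b1 := p (4/3) (by norm_num) (m + j)
  have b2 := p (((m + j : ℕ) : ℝ) + 4/3) (by positivity) j
  have b3 := p (4/3) (by norm_num) (j + j)
  have b4 := p (4/3 + ((j + j : ℕ) : ℝ)) (by positivity) m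
  have e : TT j (m + j) = (4 * ((m + j : ℕ) : ℝ) + 1) * (ris (1/2) (m + j) * ris (1/3) (m + j) /
      (((m + j).factorial : ℝ) * ris (7/6) (m + j))) * eD j *
      (ris (1/6) (m + j) / dff (((m + j : ℕ) : ℝ) - 5/6) j) *
      (dff ((m + j : ℕ) : ℝ) j / ((m + j).factorial : ℝ)) *
      ((ris (1/2) (m + j) * ris (((m + j : ℕ) : ℝ) + 1/2) j) /
        (ris (4/3) (m + j) * ris (((m + j : ℕ) : ℝ) + 4/3) j)) := by
    simp only [TT, tD, div_eq_mul_inv, mul_inv]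
    ring
  rw [e, a9, a2, a3, a1, mul_div_cancel_right₀ _ d6, a4, a5, a6, a7]
  have b5 := p (7/6) (by norm_num) j
  have b6 := p (7/6 + j) (by positivity) m
  have b7 := p (1 + j) (by positivity) m
  rw [show (4 * ((m + j : ℕ) : ℝ) + 1) = 2 * (1/2 + ((j + j : ℕ) : ℝ) + 2 * m) by push_cast; ring]
  simp only [div_eq_mul_inv, mul_inv]
  ring

lemma TT_row (j : ℕ) : HasSum (TT j) (CC * tt j) := by
  apply shift_sum j (fun i hi => TT_zero j i hi)
  have D := dougall (a := 1/2 + ((j + j : ℕ) : ℝ)) (b := 1/3 + j) (c := 1/2 + j) (d := 1/6)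
    (by positivity) (by positivity) (by positivity) (by norm_num) (by push_cast; linarith)
  have e1 : 1 + (1/2 + ((j + j : ℕ) : ℝ)) - (1/3 + j) = 7/6 + j := by push_cast; ring
  have e2 : 1 + (1/2 + ((j + j : ℕ) : ℝ)) - (1/2 + j) = 1 + j := by push_cast; ring
  have e3 : 1 + (1/2 + ((j + j : ℕ) : ℝ)) - 1/6 = 4/3 + ((j + j : ℕ) : ℝ) := by push_cast; ring
  have e4 : (7/6 + j : ℝ) - (1/2 + j) = 2/3 := by ring
  have e5 : (7/6 + j : ℝ) - 1/6 = 1 + j := by ring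
  have e6 : (1 + j : ℝ) - 1/6 = 5/6 + j := by ring
  have e7 : (2/3 : ℝ) - 1/6 = 1/2 := by norm_num
  rw [e1, e2, e3, e4, e5, e6, e7] at D
  refine hs_congr (D.mul_left _) (fun m => TT_shift j m) ?_
  have G := fun (x : ℝ) (hx : 0 < x) => Gamma_pos_of_pos hx
  have p := fun (x : ℝ) (hx : 0 < x) n => ris_pos hx n
  have e8 : Gamma (1 + (1/2 + ((j + j : ℕ) : ℝ))) =
      (1/2 + ((j + j : ℕ) : ℝ)) * (ris (1/2) (j + j) * Gamma (1/2)) := by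
    rw [add_comm (1:ℝ), Real.Gamma_add_one (by positivity), Gamma_add_nat (by norm_num)]
  have b0 := G (1 + j) (by positivity)
  have b1 := G (1/2) (by positivity)
  have b2 := G (2/3) (by positivity)
  have b3 := G (5/6) (by positivity)
  have b4 := p (1/2) (by positivity) (j + j)
  have b5 := p (4/3) (by positivity) (j + j)
  have b6 := p (7/6) (by positivity) j
  have b7 := p (5/6) (by positivity) j
  have b8 : (0:ℝ) < 1/2 + ((j + j : ℕ) : ℝ) := by positivity
  rw [e8, Gamma_add_nat (show (0:ℝ) < 7/6 by norm_num), Gamma_add_nat (show (0:ℝ) < 4/3 by norm_num),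
    Gamma_add_nat (show (0:ℝ) < 5/6 by norm_num), CC, tt]
  generalize (1/2 + ((j + j : ℕ) : ℝ)) = A at *
  field_simp

lemma TT_nonneg (j n : ℕ) : 0 ≤ TT j n := by
  rcases lt_or_ge n j with h | h
  · rw [TT_zero j n h]
  · obtain ⟨m, rfl⟩ := Nat.exists_eq_add_of_le' h
    rw [TT_shift]
    have p := fun (x : ℝ) (hx : 0 < x) n => (ris_pos hx n).le
    have b0 := p (1/2) (by positivity) j
    have b1 := p (1/3) (by positivity) j
    have b2 := p (1/2) (by positivity) (j + j)
    have b3 := p (7/6) (by positivity) j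
    have b4 := p (4/3) (by positivity) (j + j)
    have b5 := p (1/2 + ((j + j : ℕ) : ℝ)) (by positivity) m
    have b6 := p (1/3 + j) (by positivity) m
    have b7 := p (1/2 + j) (by positivity) m
    have b8 := p (1/6) (by positivity) m
    have b9 := p (7/6 + j) (by positivity) m
    have b10 := p (1 + j) (by positivity) m
    have b11 := p (4/3 + ((j + j : ℕ) : ℝ)) (by positivity) m
    have b12 := p (5/6) (by positivity) j
    unfold eD
    positivity

lemma TT_col (n : ℕ) : HasSum (fun j => TT j n) ((4 * n + 1) * dd n ^ 2) := by
  have h : HasSum (fun j => tD n j) (∑ j ∈ Finset.range (n + 1), tD n j) := by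
    apply hasSum_sum_of_ne_finset_zero
    intro m hm
    have : n < m := by simpa using hm
    simp [tD, dff_nat_zero n m this]
  rw [tD_sum] at h
  refine hs_congr (h.mul_left _) (fun j => rfl) ?_
  have p := fun (x : ℝ) (hx : 0 < x) => (ris_pos hx n).ne'
  have b0 := p (1/6) (by positivity)
  have b1 := p (7/6) (by positivity)
  have b2 := p (5/6) (by positivity)
  have b3 := p (4/3) (by positivity)
  unfold dd
  field_simp

lemma tt_summable : Summable tt := by
  have g := (gauss (a := 1/3) (b := 1/3) (c := 1) (by norm_num) (by norm_num) (by norm_num)).summable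
  refine Summable.of_nonneg_of_le (fun j => ?_) (fun j => ?_) g
  · have b0 := (ris_pos (show (0:ℝ) < 1/3 by norm_num) j)
    have b1 := (ris_pos (show (0:ℝ) < 1/2 by norm_num) j)
    have b2 := (ris_pos (show (0:ℝ) < 5/6 by norm_num) j)
    unfold tt eD
    positivity
  · have b0 := (ris_pos (show (0:ℝ) < 1/3 by norm_num) j)
    have b1 := (ris_pos (show (0:ℝ) < 1/2 by norm_num) j)
    have b2 := (ris_pos (show (0:ℝ) < 5/6 by norm_num) j)
    have b3 := ris_mono (show (0:ℝ) < 1/2 by norm_num) (show (1/2:ℝ) ≤ 5/6 by norm_num) j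
    have e : tt j = ris (1/3) j * ris (1/3) j / (j.factorial * ris 1 j) *
        (ris (1/2) j / ris (5/6) j) ^ 3 := by
      rw [ris_one]
      unfold tt eD
      field_simp
    have b4 := (ris_pos (show (0:ℝ) < 1 by norm_num) j)
    rw [e]
    refine mul_le_of_le_one_right (by positivity) ?_
    exact pow_le_one₀ (by positivity) ((div_le_one b2).2 b3)

lemma dd_sum : HasSum (fun n : ℕ => (4 * n + 1) * dd n ^ 2) (CC * ∑' j, tt j) :=
  swapSum TT_nonneg TT_row TT_col (tt_summable.hasSum.mul_left CC)

lemma pFq_tt : pFq [1/3, 1/3, 1/2, 1/2, 1/2] [5/6, 5/6, 5/6, 1] 1 = ∑' j, tt j := by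
  unfold pFq
  congr 1
  funext j
  have b2 := (ris_pos (show (0:ℝ) < 5/6 by norm_num) j)
  simp only [List.map_cons, List.map_nil, List.prod_cons, List.prod_nil, ris_one, one_pow, tt, eD]
  field_simp

noncomputable def al (i : ℕ) : ℝ := ris (1/3) i * ris (2/3) i / (i.factorial * i.factorial)

noncomputable def BB (m : ℕ) : ℝ := 2 * m.factorial / ris (3/2) m

lemma gam_prod : Gamma (7/6) * Gamma (5/6) = π / 3 := by
  have h := Real.Gamma_mul_Gamma_one_sub (1/6)
  have h2 := Real.Gamma_add_one (s := 1/6) (by norm_num)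
  rw [show (1/6 + 1 : ℝ) = 7/6 by norm_num] at h2
  rw [show (1 - 1/6 : ℝ) = 5/6 by norm_num, show π * (1/6) = π / 6 by ring, Real.sin_pi_div_six] at h
  rw [h2, mul_assoc, h]; ring

lemma gam_prod2 : Gamma (3/2) * Gamma (1/2) = π / 2 := by
  have h2 := Real.Gamma_add_one (s := 1/2) (by norm_num)
  rw [show (1/2 + 1 : ℝ) = 3/2 by norm_num] at h2
  rw [h2, Real.Gamma_one_half_eq, mul_assoc, Real.mul_self_sqrt Real.pi_pos.le]; ring

lemma AB_sum : HasSum (fun q : ℕ × ℕ => al q.1 * al q.2 * BB (q.1 + q.2))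
    (9 / 2 * (CC * ∑' j, tt j)) := by
  have h0 : (0:ℝ) < 1/2 := by norm_num
  have r3 := fun n => ris_pos (show (0:ℝ) < 1/3 by norm_num) n
  have r23 := fun n => ris_pos (show (0:ℝ) < 2/3 by norm_num) n
  have r2 := fun n => ris_pos (show (0:ℝ) < 1/2 by norm_num) n
  have r76 := fun n => ris_pos (show (0:ℝ) < 7/6 by norm_num) n
  have r56 := fun n => ris_pos (show (0:ℝ) < 5/6 by norm_num) n
  have r32 := fun n => ris_pos (show (0:ℝ) < 3/2 by norm_num) n
  have W : ∀ m, WW (1/2) 1 m = (4 * m + 1) / 2 * (ris (1/2) m / m.factorial) ^ 2 := by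
    intro m
    unfold WW
    rw [ris_one, show (1 + 1/2 - 1 : ℝ) = 1/2 by norm_num]
    field_simp
    ring
  have g : ∀ m, HasSum (fun i => ris (1/3) i * ris (2/3) i / i.factorial * hh (1/2) i m)
      (3 / 2 * (ris (1/3) m * ris (2/3) m / (ris (7/6) m * ris (5/6) m))) := by
    intro m
    refine hs_congr (gauss_shift h0 (b := 1/3) (c := 2/3) (by norm_num) (by norm_num) (by norm_num) m)
      (fun i => rfl) ?_
    rw [show (1 + 1/2 - 1/3 : ℝ) = 7/6 by norm_num, show (1 + 1/2 - 2/3 : ℝ) = 5/6 by norm_num,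
      show (7/6 - 2/3 : ℝ) = 1/2 by norm_num, show (1 + 1/2 : ℝ) = 3/2 by norm_num,
      mul_assoc (_ * _) (Gamma (3/2)), gam_prod2, mul_mul_mul_comm (ris (7/6) m), gam_prod]
    have := r76 m
    have := r56 m
    have := Real.pi_pos
    field_simp
  have Hx : ∀ i m, 0 ≤ ris (1/3) i * ris (2/3) i / i.factorial * hh (1/2) i m := fun i m => by
    have := hh_nonneg h0 i m
    have := r3 i
    have := r23 i
    positivity
  have Hw : ∀ m, 0 ≤ WW (1/2) 1 m := fun m => by rw [W]; positivity
  refine swapSum (ι := ℕ) (κ := ℕ × ℕ)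
    (f := fun m q => 4 * WW (1/2) 1 m * (ris (1/3) q.1 * ris (2/3) q.1 / q.1.factorial * hh (1/2) q.1 m) *
      (ris (1/3) q.2 * ris (2/3) q.2 / q.2.factorial * hh (1/2) q.2 m))
    (fun m q => mul_nonneg (mul_nonneg (mul_nonneg (by norm_num) (Hw m)) (Hx _ _)) (Hx _ _))
    (r := fun m => 9 / 2 * ((4 * m + 1) * dd m ^ 2)) (fun m => ?_) (fun q => ?_)
    (dd_sum.mul_left _)
  · have P := prodSum (f := fun k i => 4 * WW (1/2) 1 m * (ris (1/3) k * ris (2/3) k / k.factorial * hh (1/2) k m) *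
      (ris (1/3) i * ris (2/3) i / i.factorial * hh (1/2) i m))
      (fun k i => mul_nonneg (mul_nonneg (mul_nonneg (by norm_num) (Hw m)) (Hx _ _)) (Hx _ _))
      (fun k => (g m).mul_left _) (((g m).mul_left _).mul_right _)
    refine hs_congr P (fun q => rfl) ?_
    have := r76 m
    have := r56 m
    rw [W, dd]
    field_simp
    ring
  · refine hs_congr ((conn h0 (p := 1) (by norm_num) q.1 q.2).mul_left (4 *
      (ris (1/3) q.1 * ris (2/3) q.1 / q.1.factorial) * (ris (1/3) q.2 * ris (2/3) q.2 / q.2.factorial)))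
      (fun m => by ring) ?_
    rw [ris_one, ris_one, ris_one, al, al, BB, show (1 + 1/2 : ℝ) = 3/2 by norm_num]
    have := r32 (q.1 + q.2)
    field_simp
    ring

lemma al_sum {x : ℝ} (h0 : 0 < x) (h1 : x < 1) :
    HasSum (fun i => al i * x ^ i) (pFq [1/3, 2/3] [1] x) := by
  have hs : Summable (fun i => al i * x ^ i) := by
    refine Summable.of_nonneg_of_le (fun i => ?_) (fun i => ?_) (summable_geometric_of_lt_one h0.le h1)
    · have := ris_pos (show (0:ℝ) < 1/3 by norm_num) i
      have := ris_pos (show (0:ℝ) < 2/3 by norm_num) i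
      unfold al
      positivity
    · have a1 := ris_pos (show (0:ℝ) < 1/3 by norm_num) i
      have a2 := ris_pos (show (0:ℝ) < 2/3 by norm_num) i
      have b1 := ris_mono (show (0:ℝ) < 1/3 by norm_num) (show (1/3:ℝ) ≤ 1 by norm_num) i
      have b2 := ris_mono (show (0:ℝ) < 2/3 by norm_num) (show (2/3:ℝ) ≤ 1 by norm_num) i
      rw [ris_one] at b1 b2
      refine mul_le_of_le_one_left (by positivity) ?_
      unfold al
      rw [div_le_one (by positivity)]
      exact mul_le_mul b1 b2 a2.le (by positivity)
  refine hs_congr hs.hasSum (fun i => rfl) ?_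
  unfold pFq
  congr 1
  funext i
  simp only [List.map_cons, List.map_nil, List.prod_cons, List.prod_nil, ris_one, al]
  field_simp

lemma integral_val : (∫ x in (0:ℝ)..1, (pFq [1/3, 2/3] [1] x)^2 / Real.sqrt (1 - x)) =
    9 / 2 * (CC * ∑' j, tt j) := by
  rw [intervalIntegral.integral_of_le zero_le_one, integral_Ioc_eq_integral_Ioo]
  set F : ℕ × ℕ → ℝ → ℝ := fun q x => al q.1 * al q.2 *
    (x ^ (((q.1 + q.2 : ℕ) : ℝ) + 1 - 1) * (1 - x) ^ ((1/2 : ℝ) - 1)) with hF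
  have alp : ∀ i, 0 ≤ al i := fun i => by
    have := ris_pos (show (0:ℝ) < 1/3 by norm_num) i
    have := ris_pos (show (0:ℝ) < 2/3 by norm_num) i
    unfold al
    positivity
  have hb := fun m : ℕ => beta_both (u := (m:ℝ) + 1) (v := 1/2) (by positivity) (by norm_num)
  have hI : ∀ q, Integrable (F q) (volume.restrict (Ioo (0:ℝ) 1)) := fun q =>
    (hb (q.1 + q.2)).1.const_mul _
  have hV : ∀ q, ∫ x in Ioo (0:ℝ) 1, F q x = al q.1 * al q.2 * BB (q.1 + q.2) := by
    intro q
    simp only [hF]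
    rw [integral_const_mul, (hb (q.1 + q.2)).2, BB, Real.Gamma_nat_eq_factorial,
      show ((q.1 + q.2 : ℕ) : ℝ) + 1 + 1/2 = 3/2 + ((q.1 + q.2 : ℕ) : ℝ) by ring,
      Gamma_add_nat (by norm_num)]
    have h2 := Real.Gamma_add_one (s := 1/2) (by norm_num)
    rw [show (1/2 + 1 : ℝ) = 3/2 by norm_num] at h2
    rw [h2]
    have := Real.Gamma_pos_of_pos (show (0:ℝ) < 1/2 by norm_num)
    have := ris_pos (show (0:ℝ) < 3/2 by norm_num) (q.1 + q.2)
    field_simp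
  have hnn : ∀ q, ∀ x ∈ Ioo (0:ℝ) 1, 0 ≤ F q x := by
    intro q x hx
    have hx1 : 0 < 1 - x := by linarith [hx.2]
    have h0 := hx.1
    have := alp q.1
    have := alp q.2
    simp only [hF]
    positivity
  have hN : ∀ q, ∫ x in Ioo (0:ℝ) 1, ‖F q x‖ = al q.1 * al q.2 * BB (q.1 + q.2) := by
    intro q
    rw [← hV]
    exact setIntegral_congr_fun measurableSet_Ioo fun x hx => Real.norm_of_nonneg (hnn q x hx)
  have key := hasSum_integral_of_summable_integral_norm hI
    (by simp only [hN]; exact AB_sum.summable)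
  simp only [hV] at key
  rw [AB_sum.unique key]
  refine setIntegral_congr_fun measurableSet_Ioo fun x hx => ?_
  have hx1 : 0 < 1 - x := by linarith [hx.2]
  have h0 := hx.1
  have A := al_sum hx.1 hx.2
  have P := prodSum (f := fun i k => al i * x ^ i * (al k * x ^ k)) (fun i k => by
      have := alp i
      have := alp k
      positivity) (fun i => A.mul_left _) (A.mul_right _)
  have Q : HasSum (fun q => F q x) ((pFq [1/3, 2/3] [1] x)^2 / Real.sqrt (1 - x)) := by
    refine hs_congr (P.mul_right ((1 - x) ^ ((1/2 : ℝ) - 1))) (fun q => ?_) ?_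
    · simp only [hF]
      rw [add_sub_cancel_right, Real.rpow_natCast, pow_add]; ring
    · rw [show (1/2 - 1 : ℝ) = -(1/2) by norm_num, Real.rpow_neg hx1.le, ← Real.sqrt_eq_rpow]
      ring
  exact Q.tsum_eq.symm

lemma const_val : 9 / 2 * CC =
    (3 * Real.sqrt 3 / (2 : ℝ) ^ ((11:ℝ)/3)) * (Gamma (1/3) / Real.sqrt π)^6 := by
  have hp := Real.pi_pos
  have a1 := Real.Gamma_add_one (s := 1/6) (by norm_num)
  rw [show (1/6 + 1 : ℝ) = 7/6 by norm_num] at a1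
  have a2 := Real.Gamma_add_one (s := 1/3) (by norm_num)
  rw [show (1/3 + 1 : ℝ) = 4/3 by norm_num] at a2
  have h6 := Real.Gamma_mul_Gamma_one_sub (1/6)
  rw [show (1 - 1/6 : ℝ) = 5/6 by norm_num, show π * (1/6) = π / 6 by ring,
    Real.sin_pi_div_six] at h6
  have h3 := Real.Gamma_mul_Gamma_one_sub (1/3)
  rw [show (1 - 1/3 : ℝ) = 2/3 by norm_num, show π * (1/3) = π / 3 by ring,
    Real.sin_pi_div_three] at h3
  have hd := Real.Gamma_mul_Gamma_add_half (1/6)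
  rw [show (1/6 + 1/2 : ℝ) = 2/3 by norm_num, show (2 * (1/6) : ℝ) = 1/3 by norm_num,
    show (1 - 1/3 : ℝ) = 2/3 by norm_num] at hd
  have g1 := Real.Gamma_pos_of_pos (show (0:ℝ) < 1/3 by norm_num)
  have g2 := Real.Gamma_pos_of_pos (show (0:ℝ) < 2/3 by norm_num)
  have g3 := Real.Gamma_pos_of_pos (show (0:ℝ) < 1/6 by norm_num)
  have g4 := Real.Gamma_pos_of_pos (show (0:ℝ) < 5/6 by norm_num)
  have t : (2:ℝ) ^ ((11:ℝ)/3) = 8 * (2:ℝ) ^ ((2:ℝ)/3) := by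
    rw [show (11/3 : ℝ) = (3:ℕ) + 2/3 by norm_num, Real.rpow_add (by norm_num), Real.rpow_natCast]
    norm_num
  have t3 : ((2:ℝ) ^ ((2:ℝ)/3)) ^ 3 = 4 := by
    rw [← Real.rpow_natCast, ← Real.rpow_mul (by norm_num)]; norm_num
  have s3 : Real.sqrt 3 ^ 2 = 3 := Real.sq_sqrt (by norm_num)
  have sp : Real.sqrt π ^ 2 = π := Real.sq_sqrt hp.le
  have s3p : 0 < Real.sqrt 3 := by positivity
  have spp : 0 < Real.sqrt π := by positivity
  have tp : 0 < (2:ℝ) ^ ((2:ℝ)/3) := by positivity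
  rw [CC, a1, a2, t]
  generalize Real.sqrt π = w at *
  generalize Real.sqrt 3 = v at *
  generalize (2:ℝ) ^ ((2:ℝ)/3) = u at *
  generalize Gamma (1/3) = A at *
  generalize Gamma (2/3) = B at *
  generalize Gamma (1/6) = D at *
  generalize Gamma (5/6) = E at *
  rw [← sp] at h6 h3
  have eB : B = 2 * w ^ 2 / (v * A) := by
    rw [eq_div_iff (by positivity)]
    field_simp at h3
    linarith
  have eD' : D = u * w * A / B := by
    rw [eq_div_iff (by positivity), hd]; ring
  have eE : E = 2 * w ^ 2 / D := by
    rw [eq_div_iff (by positivity)]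
    linarith
  rw [eE, eD', eB]
  field_simp
  rw [t3, s3]
  norm_num

theorem laporta_integral_5F4 :
    (∫ x in (0:ℝ)..1, (pFq [1/3, 2/3] [1] x)^2 / Real.sqrt (1 - x))
    = (3 * Real.sqrt 3 / (2 : ℝ) ^ ((11:ℝ)/3)) * (Gamma (1/3) / Real.sqrt π)^6 *
        pFq [1/3, 1/3, 1/2, 1/2, 1/2] [5/6, 5/6, 5/6, 1] 1 := by
  rw [integral_val, ← const_val, pFq_tt]
  ring
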